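/- There exists a constant C > 1 such that for every integer x ≥ 1 and every element W of N(∞) with |W| ≤ x, W can be written as a product of at most C·x² conjugates of elements of R*(∞) ∪ R*(∞)⁻¹. That is, the Dehn 2-function of the presentation ⟨a, b, c, d ∥ R*(∞)⟩ of the Grigorchuk 2-group is bounded from above by a quadratic function. -/

import Mathlib

/-- The four-letter alphabet `{a, b, c, d}`. -/
inductive L4 : Type
  | a | b | c | d
  deriving DecidableEq

/-- The free group `F = F(a, b, c, d)`. -/
abbrev F4 : Type := FreeGroup L4

def ga : F4 := FreeGroup.of L4.a
def gb : F4 := FreeGroup.of L4.b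
def gc : F4 := FreeGroup.of L4.c
def gd : F4 := FreeGroup.of L4.d

/-- The endomorphism `σ` of `F(a,b,c,d)`:
`σ(a) = aca`, `σ(b) = d`, `σ(c) = b`, `σ(d) = c`. -/
def sigma : F4 →* F4 :=
  FreeGroup.lift fun x => match x with
    | L4.a => ga * gc * ga
    | L4.b => gd
    | L4.c => gb
    | L4.d => gc

/-- The Lysenok relator set
`R(∞) = {a², b², c², d², bcd} ∪ {σⁱ((ad)⁴) : i ≥ 0} ∪ {σⁱ((adacac)⁴) : i ≥ 0}`. -/
def Rinf : Set F4 :=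
  {ga ^ 2, gb ^ 2, gc ^ 2, gd ^ 2, gb * gc * gd}
    ∪ {w | ∃ i : ℕ, w = (⇑sigma)^[i] ((ga * gd) ^ 4)}
    ∪ {w | ∃ i : ℕ, w = (⇑sigma)^[i] ((ga * gd * ga * gc * ga * gc) ^ 4)}

/-- `W` is a product of `L` conjugates of elements of `R ∪ R⁻¹`. -/
def IsProdConjPM {G : Type*} [Group G] (R : Set G) (L : ℕ) (W : G) : Prop :=
  ∃ f : Fin L → G,
    (∀ j, ∃ x r, r ∈ R ∧ (f j = x * r * x⁻¹ ∨ f j = x * r⁻¹ * x⁻¹)) ∧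
    W = (List.ofFn f).prod

/-- The extended relator set `R*(∞) = R(∞) ∪ {σⁱ(a²) : i ≥ 1}`. -/
def RinfStar : Set F4 :=
  Rinf ∪ {w | ∃ i : ℕ, 1 ≤ i ∧ w = (⇑sigma)^[i] (ga ^ 2)}

instance instFintypeL4 : Fintype L4 := ⟨{L4.a, L4.b, L4.c, L4.d}, by intro x; cases x <;> decide⟩

/-- `Ar n w`: `w` is a product of at most `n` conjugates of relators. -/
inductive Ar : ℕ → F4 → Prop
  | one (n : ℕ) : Ar n 1
  | pos (n : ℕ) (x r w : F4) : r ∈ RinfStar → Ar n w → Ar (n + 1) (x * r * x⁻¹ * w)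
  | neg (n : ℕ) (x r w : F4) : r ∈ RinfStar → Ar n w → Ar (n + 1) (x * r⁻¹ * x⁻¹ * w)

theorem Ar.toProd {n : ℕ} {w : F4} (h : Ar n w) : ∃ L ≤ n, IsProdConjPM RinfStar L w := by
  induction h with
  | one n => exact ⟨0, Nat.zero_le _, fun j => 1, fun j => j.elim0, by simp⟩
  | pos n x r w hr _ ih =>
    obtain ⟨L, hL, f, hf, rfl⟩ := ih
    refine ⟨L + 1, by omega, Fin.cons (x * r * x⁻¹) f, ?_, by simp [List.ofFn_succ]⟩
    intro j
    refine Fin.cases ?_ (fun j => ?_) j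
    · exact ⟨x, r, hr, Or.inl (by simp)⟩
    · simpa using hf j
  | neg n x r w hr _ ih =>
    obtain ⟨L, hL, f, hf, rfl⟩ := ih
    refine ⟨L + 1, by omega, Fin.cons (x * r⁻¹ * x⁻¹) f, ?_, by simp [List.ofFn_succ]⟩
    intro j
    refine Fin.cases ?_ (fun j => ?_) j
    · exact ⟨x, r, hr, Or.inr (by simp)⟩
    · simpa using hf j

theorem Ar.mono {n : ℕ} {w : F4} (h : Ar n w) : ∀ {m : ℕ}, n ≤ m → Ar m w := by
  induction h with
  | one n => intro m _; exact Ar.one m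
  | pos n x r w hr _ ih =>
    intro m hm
    obtain ⟨k, rfl⟩ : ∃ k, m = k + 1 := ⟨m - 1, by omega⟩
    exact Ar.pos k x r w hr (ih (by omega))
  | neg n x r w hr _ ih =>
    intro m hm
    obtain ⟨k, rfl⟩ : ∃ k, m = k + 1 := ⟨m - 1, by omega⟩
    exact Ar.neg k x r w hr (ih (by omega))

theorem Ar.mul {m n : ℕ} {u v : F4} (h : Ar m u) (h' : Ar n v) : Ar (m + n) (u * v) := by
  induction h with
  | one m => simpa using h'.mono (by omega)
  | pos m x r w hr _ ih =>
    have := Ar.pos _ x r _ hr ih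
    rw [show m + 1 + n = m + n + 1 by omega]; simpa [mul_assoc] using this
  | neg m x r w hr _ ih =>
    have := Ar.neg _ x r _ hr ih
    rw [show m + 1 + n = m + n + 1 by omega]; simpa [mul_assoc] using this

theorem Ar.conj {m : ℕ} {u : F4} (h : Ar m u) (y : F4) : Ar m (y * u * y⁻¹) := by
  induction h with
  | one m => simpa using Ar.one m
  | pos m x r w hr _ ih =>
    have := Ar.pos _ (y * x) r _ hr ih
    simpa [mul_assoc] using this
  | neg m x r w hr _ ih =>
    have := Ar.neg _ (y * x) r _ hr ih
    simpa [mul_assoc] using this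

theorem Ar.posOne {r : F4} (hr : r ∈ RinfStar) (x : F4) : Ar 1 (x * r * x⁻¹) := by
  simpa using Ar.pos 0 x r 1 hr (Ar.one 0)

theorem Ar.negOne {r : F4} (hr : r ∈ RinfStar) (x : F4) : Ar 1 (x * r⁻¹ * x⁻¹) := by
  simpa using Ar.neg 0 x r 1 hr (Ar.one 0)

theorem Ar.inv {m : ℕ} {u : F4} (h : Ar m u) : Ar m u⁻¹ := by
  induction h with
  | one m => simpa using Ar.one m
  | pos m x r w hr _ ih =>
    have := ih.mul (Ar.negOne hr x)
    simpa [mul_assoc] using this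
  | neg m x r w hr _ ih =>
    have := ih.mul (Ar.posOne hr x)
    simpa [mul_assoc] using this

theorem sigma_a : sigma ga = ga * gc * ga := by simp [sigma, ga]
theorem sigma_b : sigma gb = gd := by simp [sigma, gb]
theorem sigma_c : sigma gc = gb := by simp [sigma, gc]
theorem sigma_d : sigma gd = gc := by simp [sigma, gd]

theorem sigma_rel {r : F4} (hr : r ∈ RinfStar) : ∃ x s, s ∈ RinfStar ∧ sigma r = x * s * x⁻¹ := by
  rcases hr with ((h | ⟨i, rfl⟩) | ⟨i, rfl⟩) | ⟨i, hi, rfl⟩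
  · simp only [Set.mem_insert_iff, Set.mem_singleton_iff] at h
    rcases h with rfl | rfl | rfl | rfl | rfl
    · exact ⟨1, sigma (ga ^ 2), Or.inr ⟨1, le_rfl, rfl⟩, by simp⟩
    · exact ⟨1, gd ^ 2, by simp [RinfStar, Rinf], by simp [sigma_b]⟩
    · exact ⟨1, gb ^ 2, by simp [RinfStar, Rinf], by simp [sigma_c]⟩
    · exact ⟨1, gc ^ 2, by simp [RinfStar, Rinf], by simp [sigma_d]⟩
    · exact ⟨gd, gb * gc * gd, by simp [RinfStar, Rinf],
        by simp [sigma_b, sigma_c, sigma_d, mul_assoc]⟩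
  · exact ⟨1, _, Or.inl (Or.inl (Or.inr ⟨i + 1, rfl⟩)), by
      rw [Function.iterate_succ_apply']; simp⟩
  · exact ⟨1, _, Or.inl (Or.inr ⟨i + 1, rfl⟩), by
      rw [Function.iterate_succ_apply']; simp⟩
  · exact ⟨1, _, Or.inr ⟨i + 1, by omega, rfl⟩, by
      rw [Function.iterate_succ_apply']; simp⟩

theorem Ar.sigma {m : ℕ} {u : F4} (h : Ar m u) : Ar m (sigma u) := by
  induction h with
  | one m => simpa using Ar.one m
  | pos m x r w hr _ ih =>
    obtain ⟨y, s, hs, e⟩ := sigma_rel hr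
    have := Ar.pos _ (_root_.sigma x * y) s _ hs ih
    simpa [mul_assoc, e] using this
  | neg m x r w hr _ ih =>
    obtain ⟨y, s, hs, e⟩ := sigma_rel hr
    have := Ar.neg _ (_root_.sigma x * y) s _ hs ih
    simpa [mul_assoc, e] using this

/-- approximate equality -/
def E (n : ℕ) (u v : F4) : Prop := Ar n (u * v⁻¹)

theorem E.refl (u : F4) (n : ℕ) : E n u u := by simpa [E] using Ar.one n

theorem E.of_eq {u v : F4} (h : u = v) (n : ℕ) : E n u v := h ▸ E.refl u n

theorem E.mono {m n : ℕ} {u v : F4} (h : E m u v) (hmn : m ≤ n) : E n u v := Ar.mono h hmn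

theorem E.symm {n : ℕ} {u v : F4} (h : E n u v) : E n v u := by
  simpa [E] using Ar.inv h

theorem E.trans {m n : ℕ} {u v w : F4} (h : E m u v) (h' : E n v w) : E (m + n) u w := by
  simpa [E, mul_assoc] using Ar.mul h h'

theorem E.mul {m n : ℕ} {u v u' v' : F4} (h : E m u u') (h' : E n v v') :
    E (m + n) (u * v) (u' * v') := by
  have := (Ar.conj h' u).mul h
  rw [add_comm]
  simpa [E, mul_assoc] using this

theorem E.ar {m n : ℕ} {u v : F4} (h : E m u v) (h' : Ar n v) : Ar (m + n) u := by
  simpa [E, mul_assoc] using Ar.mul h h'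

abbrev NN : Subgroup F4 := Subgroup.normalClosure Rinf
abbrev GG : Type := F4 ⧸ NN
abbrev q : F4 →* GG := QuotientGroup.mk' NN

theorem q_one {u : F4} : q u = 1 ↔ u ∈ NN := QuotientGroup.eq_one_iff u

theorem ex_Ar {u : F4} (h : q u = 1) : ∃ k, Ar k u := by
  rw [q_one] at h
  refine Subgroup.closure_induction (p := fun u _ => ∃ k, Ar k u) ?_ ?_ ?_ ?_ h
  · intro x hx
    rw [Group.mem_conjugatesOfSet_iff] at hx
    obtain ⟨r, hr, hc⟩ := hx
    obtain ⟨c, rfl⟩ := isConj_iff.1 hc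
    exact ⟨1, Ar.posOne (Or.inl hr) c⟩
  · exact ⟨0, Ar.one 0⟩
  · rintro x y _ _ ⟨k, hk⟩ ⟨l, hl⟩
    exact ⟨_, hk.mul hl⟩
  · rintro x _ ⟨k, hk⟩
    exact ⟨_, hk.inv⟩

theorem ex_E {u v : F4} (h : q u = q v) : ∃ k, E k u v :=
  ex_Ar (by rw [map_mul, map_inv, h, mul_inv_cancel])

theorem unif {ι : Type*} [Fintype ι] {P : ι → ℕ → Prop} (hm : ∀ i m n, m ≤ n → P i m → P i n)
    (h : ∀ i, ∃ k, P i k) : ∃ K, ∀ i, P i K := by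
  choose f hf using h
  exact ⟨Finset.univ.sup f, fun i => hm i _ _ (Finset.le_sup (Finset.mem_univ i)) (hf i)⟩

theorem q_rel {r : F4} (hr : r ∈ Rinf) : q r = 1 := q_one.2 (Subgroup.subset_normalClosure hr)

theorem qaa : q ga * q ga = 1 := by
  have := q_rel (r := ga ^ 2) (by simp [Rinf]); rwa [map_pow, pow_two] at this
theorem qbb : q gb * q gb = 1 := by
  have := q_rel (r := gb ^ 2) (by simp [Rinf]); rwa [map_pow, pow_two] at this
theorem qcc : q gc * q gc = 1 := by
  have := q_rel (r := gc ^ 2) (by simp [Rinf]); rwa [map_pow, pow_two] at this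
theorem qdd : q gd * q gd = 1 := by
  have := q_rel (r := gd ^ 2) (by simp [Rinf]); rwa [map_pow, pow_two] at this
theorem qbcd : q gb * q gc * q gd = 1 := by
  have := q_rel (r := gb * gc * gd) (by simp [Rinf]); rwa [map_mul, map_mul] at this
theorem qad4 : (q ga * q gd) ^ 4 = 1 := by
  have := q_rel (r := (ga * gd) ^ 4) (Or.inl (Or.inr ⟨0, rfl⟩)); rwa [map_pow, map_mul] at this
theorem qadacac : (q ga * q gd * q ga * q gc * q ga * q gc) ^ 4 = 1 := by
  have := q_rel (r := (ga * gd * ga * gc * ga * gc) ^ 4) (Or.inr ⟨0, rfl⟩)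
  simpa only [map_pow, map_mul] using this

theorem qai : (q ga)⁻¹ = q ga := inv_eq_of_mul_eq_one_left qaa
theorem qbi : (q gb)⁻¹ = q gb := inv_eq_of_mul_eq_one_left qbb
theorem qci : (q gc)⁻¹ = q gc := inv_eq_of_mul_eq_one_left qcc
theorem qdi : (q gd)⁻¹ = q gd := inv_eq_of_mul_eq_one_left qdd

theorem qb_eq : q gb = q gc * q gd := by
  have := mul_eq_one_iff_eq_inv.1 (by simpa [mul_assoc] using qbcd : q gb * (q gc * q gd) = 1)
  rw [← qbi, this, inv_inv]
theorem qdc : q gd * q gc = q gc * q gd := by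
  have h := qbi
  rw [qb_eq, mul_inv_rev, qci, qdi] at h
  exact h

theorem assocL {G : Type*} [Group G] {x y z : G} (h : x * y = z) (w : G) :
    x * (y * w) = z * w := by rw [← mul_assoc, h]

theorem invol_comm {G : Type*} [Group G] {p m : G} (hp : p * p = 1) (hm : m * m = 1)
    (h : (p * m) ^ 4 = 1) : p * (m * p * m) = m * p * m * p := by
  have hp' : p⁻¹ = p := inv_eq_of_mul_eq_one_left hp
  have hm' : m⁻¹ = m := inv_eq_of_mul_eq_one_left hm
  have : (p * m) ^ 2 = ((p * m) ^ 2)⁻¹ := by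
    rw [eq_inv_iff_mul_eq_one, ← pow_add, h]
  simpa [pow_two, hp', hm', mul_assoc] using this

theorem qdada : q gd * (q ga * q gd * q ga) = q ga * q gd * q ga * q gd := by
  apply invol_comm qdd qaa
  have : (q gd * q ga) = (q ga * q gd)⁻¹ := by rw [mul_inv_rev, qai, qdi]
  rw [this, inv_pow, qad4, inv_one]
set_option linter.unusedSimpArgs false

/-- the map to the dihedral group -/
def phi : F4 →* F4 :=
  FreeGroup.lift fun x => match x with
    | L4.a => gd
    | L4.b => 1
    | L4.c => ga
    | L4.d => ga

theorem phi_a : phi ga = gd := by simp [phi, ga]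
theorem phi_b : phi gb = 1 := by simp [phi, gb]
theorem phi_c : phi gc = ga := by simp [phi, gc]
theorem phi_d : phi gd = ga := by simp [phi, gd]

theorem gen_of (x : L4) : (FreeGroup.of x = ga ∨ FreeGroup.of x = gb ∨ FreeGroup.of x = gc ∨
    FreeGroup.of x = gd) := by
  cases x <;> simp [ga, gb, gc, gd]

theorem a_zpow (k : ℤ) : q ga * (q ga * q gd) ^ k = (q ga * q gd) ^ (-k) * q ga := by
  have h : q ga * (q ga * q gd) * (q ga)⁻¹ = (q ga * q gd)⁻¹ := by
    rw [mul_inv_rev, qai, qdi, ← mul_assoc, qaa, one_mul]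
  have h2 := conj_zpow (i := k) (a := q ga) (b := q ga * q gd)
  rw [h, inv_zpow'] at h2
  rw [h2]; group

theorem phi_form (u : F4) : ∃ k : ℤ, q (phi u) = (q ga * q gd) ^ k ∨
    q (phi u) = (q ga * q gd) ^ k * q ga := by
  induction u using FreeGroup.induction_on with
  | C1 => exact ⟨0, Or.inl (by simp)⟩
  | of x =>
    rcases gen_of x with h | h | h | h <;> rw [h]
    · refine ⟨-1, Or.inr ?_⟩
      rw [phi_a, zpow_neg_one, mul_inv_rev, qai, qdi, mul_assoc, qaa, mul_one]
    · exact ⟨0, Or.inl (by simp [phi_b])⟩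
    · exact ⟨0, Or.inr (by simp [phi_c])⟩
    · exact ⟨0, Or.inr (by simp [phi_d])⟩
  | inv_of x ih =>
    obtain ⟨k, h | h⟩ := ih
    · exact ⟨-k, Or.inl (by rw [map_inv, map_inv, h, zpow_neg])⟩
    · refine ⟨k, Or.inr ?_⟩
      rw [map_inv, map_inv, h, mul_inv_rev, qai, ← zpow_neg, a_zpow, neg_neg]
  | mul u v hu hv =>
    obtain ⟨k, h | h⟩ := hu <;> obtain ⟨l, h' | h'⟩ := hv
    · exact ⟨k + l, Or.inl (by rw [map_mul, map_mul, h, h', zpow_add])⟩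
    · exact ⟨k + l, Or.inr (by rw [map_mul, map_mul, h, h', zpow_add, mul_assoc])⟩
    · exact ⟨k + -l, Or.inr (by
        rw [map_mul, map_mul, h, h', zpow_add, mul_assoc, a_zpow, mul_assoc])⟩
    · exact ⟨k + -l, Or.inl (by
        rw [map_mul, map_mul, h, h', zpow_add, mul_assoc, ← mul_assoc (q ga), a_zpow,
          mul_assoc _ (q ga), qaa, mul_one])⟩

theorem phi_pow4 (u : F4) : q (phi u) ^ 4 = 1 := by
  obtain ⟨k, h | h⟩ := phi_form u
  · rw [h, ← zpow_natCast, ← zpow_mul, mul_comm, zpow_mul, zpow_natCast, qad4, one_zpow]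
  · have h2 : q (phi u) ^ 2 = 1 := by
      rw [h, pow_two, mul_assoc, ← mul_assoc (q ga), a_zpow, mul_assoc _ (q ga), qaa, mul_one,
        ← zpow_add]; simp
    rw [show 4 = 2 * 2 by rfl, pow_mul, h2, one_pow]

abbrev II : Type := Fin 4 × Fin 2

/-- representatives of the dihedral group -/
def rep (h : II) : F4 := (ga * gd) ^ (h.1 : ℕ) * ga ^ (h.2 : ℕ)

theorem rep_zero : rep (0, 0) = 1 := by simp [rep]

theorem rep_phi (h : II) : ∃ u, phi u = rep h :=
  ⟨(gd * ga) ^ (h.1 : ℕ) * gd ^ (h.2 : ℕ), by simp [rep, phi_a, phi_d]⟩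

theorem phi_rep (u : F4) : ∃ h, q (phi u) = q (rep h) := by
  obtain ⟨k, hk⟩ := phi_form u
  have hj : ∃ j : Fin 4, (q ga * q gd) ^ k = (q ga * q gd) ^ (j : ℕ) := by
    refine ⟨⟨(k % 4).toNat, by omega⟩, ?_⟩
    have h1 : k = 4 * (k / 4) + ((k % 4).toNat : ℤ) := by omega
    conv_lhs => rw [h1]
    have h4 : (q ga * q gd) ^ (4 : ℤ) = 1 := by
      have := qad4
      rwa [← zpow_natCast] at this
    rw [zpow_add, zpow_mul, h4, one_zpow, one_mul, zpow_natCast]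
  obtain ⟨j, hj⟩ := hj
  rcases hk with h | h
  · exact ⟨(j, 0), by rw [h, hj]; simp [rep]⟩
  · exact ⟨(j, 1), by rw [h, hj]; simp [rep]⟩

theorem iter_pow (i : ℕ) (u : F4) : (⇑sigma)^[i] (u ^ 4) = ((⇑sigma)^[i] u) ^ 4 := by
  induction i with
  | zero => rfl
  | succ i ih => rw [Function.iterate_succ_apply', ih, map_pow, Function.iterate_succ_apply']

theorem phi_NN {u : F4} (h : q u = 1) : q (phi u) = 1 := by
  have : NN ≤ (q.comp phi).ker := by
    apply Subgroup.normalClosure_le_normal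
    rintro r ((h | ⟨i, rfl⟩) | ⟨i, rfl⟩)
    · simp only [Set.mem_insert_iff, Set.mem_singleton_iff] at h
      rcases h with rfl | rfl | rfl | rfl | rfl <;>
        simp only [SetLike.mem_coe, MonoidHom.mem_ker, MonoidHom.comp_apply, map_pow, map_mul,
          phi_a, phi_b, phi_c, phi_d, pow_two, qaa, qdd, map_one, one_mul]
    · simp only [SetLike.mem_coe, MonoidHom.mem_ker, MonoidHom.comp_apply]
      rw [iter_pow, map_pow, map_pow, phi_pow4]
    · simp only [SetLike.mem_coe, MonoidHom.mem_ker, MonoidHom.comp_apply]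
      rw [iter_pow, map_pow, map_pow, phi_pow4]
  exact this (q_one.1 h)

theorem sigma_NN {u : F4} (h : q u = 1) : q (sigma u) = 1 := by
  have : NN ≤ (q.comp sigma).ker := by
    apply Subgroup.normalClosure_le_normal
    rintro r ((h | ⟨i, rfl⟩) | ⟨i, rfl⟩)
    · simp only [Set.mem_insert_iff, Set.mem_singleton_iff] at h
      rcases h with rfl | rfl | rfl | rfl | rfl <;>
        simp only [SetLike.mem_coe, MonoidHom.mem_ker, MonoidHom.comp_apply, map_pow, map_mul,
          sigma_a, sigma_b, sigma_c, sigma_d, pow_two, qbb, qcc, qdd, map_one, one_mul]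
      · simp only [mul_assoc, assocL qaa, assocL qcc, one_mul, qaa]
      · rw [qb_eq, mul_assoc, mul_assoc, qdc, assocL qcc, one_mul, qdd]
    · simp only [SetLike.mem_coe, MonoidHom.mem_ker, MonoidHom.comp_apply]
      exact q_rel (Or.inl (Or.inr ⟨i + 1, by rw [Function.iterate_succ_apply']⟩))
    · simp only [SetLike.mem_coe, MonoidHom.mem_ker, MonoidHom.comp_apply]
      exact q_rel (Or.inr ⟨i + 1, by rw [Function.iterate_succ_apply']⟩)
  exact this (q_one.1 h)

theorem sigma_q {u v : F4} (h : q u = q v) : q (sigma u) = q (sigma v) := by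
  have : q (sigma (u * v⁻¹)) = 1 := sigma_NN (by rw [map_mul, map_inv, h, mul_inv_cancel])
  rw [map_mul, map_inv, map_mul, map_inv] at this
  exact mul_inv_eq_one.1 this

/-- `σ` followed by conjugation by `a` -/
def tau : F4 →* F4 := (MulAut.conj ga).toMonoidHom.comp sigma

theorem tau_apply (u : F4) : tau u = ga * sigma u * ga⁻¹ := by simp [tau]

theorem tau_q {u v : F4} (h : q u = q v) : q (tau u) = q (tau v) := by
  simp only [tau_apply, map_mul, sigma_q h]

theorem Ar.tau {m : ℕ} {u : F4} (h : Ar m u) : Ar m (tau u) := by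
  rw [tau_apply]; exact h.sigma.conj ga

theorem q_tau_a : q (tau ga) = q gc := by
  simp only [tau_apply, sigma_a, map_mul, map_inv, qai, mul_assoc, assocL qaa, one_mul, qaa,
    mul_one]

/-- conjugates of `b` -/
def Y (y : GG) : Prop := y = q gb ∨ y = q (ga * gb * ga) ∨ y = q (gd * ga * gb * ga * gd) ∨
  y = q (ga * gd * ga * gb * ga * gd * ga)

theorem qdada' : q gd * (q ga * (q gd * q ga)) = q ga * (q gd * (q ga * q gd)) := by
  simpa only [mul_assoc] using qdada
theorem qdada'' (w : GG) :
    q gd * (q ga * (q gd * (q ga * w))) = q ga * (q gd * (q ga * (q gd * w))) := by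
  have := congrArg (· * w) qdada'
  simpa only [mul_assoc] using this

theorem Y_a {y : GG} (h : Y y) : Y (q ga * y * q ga) := by
  unfold Y at *
  rcases h with rfl | rfl | rfl | rfl
  · right; left; simp only [map_mul]
  · left; simp only [map_mul, mul_assoc, assocL qaa, one_mul, qaa, mul_one]
  · right; right; right; simp only [map_mul, mul_assoc]
  · right; right; left; simp only [map_mul, mul_assoc, assocL qaa, one_mul, qaa, mul_one]

theorem Y_d {y : GG} (h : Y y) : Y (q gd * y * q gd) := by
  unfold Y at *
  rcases h with rfl | rfl | rfl | rfl
  · left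
    rw [qb_eq, ← mul_assoc, qdc, mul_assoc, qdd, mul_one]
  · right; right; left; simp only [map_mul, mul_assoc]
  · right; left; simp only [map_mul, mul_assoc, assocL qdd, one_mul, qdd, mul_one]
  · right; right; right
    simp only [map_mul, mul_assoc, qdada'', qb_eq, ← qdc]
    simp only [assocL qdd, one_mul]
    rw [assocL qdc, mul_assoc, qdada']

theorem Y_phi (u : F4) : ∀ {y : GG}, Y y → Y (q (phi u) * y * (q (phi u))⁻¹) := by
  induction u using FreeGroup.induction_on with
  | C1 => intro y h; simpa using h
  | of x =>
    intro y h
    rcases gen_of x with e | e | e | e <;> rw [e]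
    · rw [phi_a, qdi]; exact Y_d h
    · simpa [phi_b] using h
    · rw [phi_c, qai]; exact Y_a h
    · rw [phi_d, qai]; exact Y_a h
  | inv_of x _ =>
    intro y h
    rcases gen_of x with e | e | e | e <;> rw [e]
    · rw [map_inv, map_inv, phi_a, qdi, qdi]; exact Y_d h
    · simpa [phi_b] using h
    · rw [map_inv, map_inv, phi_c, qai, qai]; exact Y_a h
    · rw [map_inv, map_inv, phi_d, qai, qai]; exact Y_a h
  | mul u v hu hv =>
    intro y h
    have := hu (hv h)
    simpa [mul_assoc] using this

theorem d_tau_b : q gd * q (tau gb) = q (tau gb) * q gd := by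
  simp only [tau_apply, sigma_b, map_mul, map_inv, qai]
  exact qdada

theorem d_tau_dabad : q gd * q (tau (gd * ga * gb * ga * gd)) =
    q (tau (gd * ga * gb * ga * gd)) * q gd := by
  have h := invol_comm (p := q gd) (m := q ga * q gc * q ga * q gc * q ga) qdd
    (by simp only [mul_assoc, assocL qaa, assocL qcc, one_mul, qaa])
    (by
      have h1 : q gd * (q ga * q gc * q ga * q gc * q ga) =
          (q ga)⁻¹ * (q ga * q gd * q ga * q gc * q ga * q gc) * ((q ga)⁻¹)⁻¹ := by
        simp only [mul_assoc, inv_mul_cancel_left, inv_inv]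
      rw [h1, conj_pow, qadacac]; simp)
  simpa only [tau_apply, sigma_a, sigma_b, sigma_d, map_mul, map_inv, qai, mul_assoc,
    assocL qaa, one_mul] using h

theorem d_tau_conj {y : F4} (h : q gd * q (tau y) = q (tau y) * q gd) :
    q gd * q (tau (ga * y * ga)) = q (tau (ga * y * ga)) * q gd := by
  simp only [map_mul, q_tau_a, mul_assoc] at *
  rw [assocL qdc, mul_assoc, ← qdc, ← mul_assoc (q gd) (q (tau y)), h, mul_assoc]

theorem d_tau {y : F4} (h : Y (q y)) : q gd * q (tau y) = q (tau y) * q gd := by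
  rcases h with h | h | h | h <;> rw [tau_q h]
  · exact d_tau_b
  · exact d_tau_conj d_tau_b
  · exact d_tau_dabad
  · have := d_tau_conj d_tau_dabad
    simpa only [mul_assoc] using this

theorem sig_tau (u : F4) : ∀ {y : F4}, Y (q y) →
    q (sigma u * tau y * (sigma u)⁻¹) = q (tau (phi u * y * (phi u)⁻¹)) := by
  have key : ∀ (x : L4) {y : F4}, Y (q y) → q (sigma (FreeGroup.of x) * tau y *
      (sigma (FreeGroup.of x))⁻¹) =
      q (tau (phi (FreeGroup.of x) * y * (phi (FreeGroup.of x))⁻¹)) := by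
    intro x y hy
    rcases gen_of x with e | e | e | e <;> rw [e]
    · simp only [sigma_a, phi_a, map_mul, map_inv, tau_apply gd, sigma_d, qai, mul_inv_rev]
    · simp only [sigma_b, phi_b, map_mul, map_inv, map_one, d_tau hy]
      simp
    · simp only [sigma_c, phi_c, map_mul, map_inv, q_tau_a, qb_eq, mul_inv_rev, mul_assoc]
      rw [← mul_assoc (q gd), d_tau hy]; simp [mul_assoc]
    · simp only [sigma_d, phi_d, map_mul, map_inv, q_tau_a]
  induction u using FreeGroup.induction_on with
  | C1 => intro y h; simp
  | of x => exact key x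
  | inv_of x _ =>
    intro y h
    have h2 : Y (q (phi (FreeGroup.of x)⁻¹ * y * (phi (FreeGroup.of x)⁻¹)⁻¹)) := by
      rw [map_mul, map_mul, map_inv q]; exact Y_phi _ h
    have h3 := key x h2
    have h4 : phi (FreeGroup.of x) * (phi (FreeGroup.of x)⁻¹ * y * (phi (FreeGroup.of x)⁻¹)⁻¹) *
      (phi (FreeGroup.of x))⁻¹ = y := by
      rw [map_inv]; group
    rw [h4, map_mul, map_mul] at h3
    rw [map_mul, map_mul, ← h3]
    simp [mul_assoc]
  | mul u v hu hv =>
    intro y h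
    have h2 : Y (q (phi v * y * (phi v)⁻¹)) := by
      rw [map_mul, map_mul, map_inv q]; exact Y_phi _ h
    have h3 := hu h2
    rw [map_mul, map_mul, ← hv h] at h3
    simpa [mul_assoc] using h3

/-- basic conjugates -/
def cc (h : II) : F4 := rep h * gb * (rep h)⁻¹

theorem Y_cc (h : II) : Y (q (cc h)) := by
  obtain ⟨u, hu⟩ := rep_phi h
  rw [cc, ← hu, map_mul, map_mul, map_inv]
  exact Y_phi u (Or.inl rfl)

theorem conjG (u : F4) (h : II) : ∃ h', q (sigma u * tau (cc h) * (sigma u)⁻¹) = q (tau (cc h')) ∧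
    q (phi u * cc h * (phi u)⁻¹) = q (cc h') := by
  obtain ⟨v, hv⟩ := rep_phi h
  obtain ⟨h', hh⟩ := phi_rep (u * v)
  have e : q (phi u * cc h * (phi u)⁻¹) = q (cc h') := by
    rw [map_mul, map_mul, hv] at hh
    simp only [cc, map_mul, map_inv, ← hh, mul_inv_rev, mul_assoc]
  exact ⟨h', by rw [sig_tau u (Y_cc h), tau_q e], e⟩

theorem RStar_q {r : F4} (hr : r ∈ RinfStar) : q r = 1 := by
  rcases hr with h | ⟨i, -, rfl⟩
  · exact q_rel h
  · induction i with
    | zero => exact q_rel (by simp [Rinf])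
    | succ i ih => rw [Function.iterate_succ_apply']; exact sigma_NN ih

theorem Ar_q {n : ℕ} {u : F4} (h : Ar n u) : q u = 1 := by
  induction h with
  | one => exact map_one _
  | pos n x r w hr _ ih => simp only [map_mul, map_inv, RStar_q hr, ih]; simp
  | neg n x r w hr _ ih => simp only [map_mul, map_inv, RStar_q hr, ih]; simp

theorem E_q {n : ℕ} {u v : F4} (h : E n u v) : q u = q v := by
  have := Ar_q h
  rw [map_mul, map_inv] at this
  exact mul_inv_eq_one.1 this

/-- evaluation of a positive word -/
def ev (w : List L4) : F4 := (w.map FreeGroup.of).prod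

theorem ev_nil : ev [] = 1 := rfl
theorem ev_cons (x : L4) (w : List L4) : ev (x :: w) = FreeGroup.of x * ev w := by simp [ev]
theorem ev_append (v w : List L4) : ev (v ++ w) = ev v * ev w := by simp [ev]

/-- section of a letter -/
def piece : Bool → L4 → List L4
  | _, L4.a => []
  | false, L4.b => [L4.c]
  | false, L4.c => [L4.d]
  | false, L4.d => [L4.b]
  | true, L4.b => [L4.a]
  | true, L4.c => [L4.a]
  | true, L4.d => []

/-- section of a word -/
def sec : Bool → List L4 → List L4
  | _, [] => []
  | i, L4.a :: w => sec (!i) w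
  | i, x :: w => piece i x ++ sec i w

/-- parity of the number of `a` -/
def par : List L4 → Bool
  | [] => false
  | L4.a :: w => !(par w)
  | _ :: w => par w

theorem sec_v {x : L4} (hx : x ≠ L4.a) (i : Bool) (w : List L4) :
    sec i (x :: w) = piece i x ++ sec i w := by
  cases x <;> first | exact absurd rfl hx | rfl

theorem par_v {x : L4} (hx : x ≠ L4.a) (w : List L4) : par (x :: w) = par w := by
  cases x <;> first | exact absurd rfl hx | rfl

/-- the flip -/
def flipP : Equiv.Perm (Bool × GG) where
  toFun p := (!p.1, p.2)
  invFun p := (!p.1, p.2)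
  left_inv p := by simp
  right_inv p := by simp

/-- diagonal permutation -/
def diagP (m : Bool → GG) : Equiv.Perm (Bool × GG) where
  toFun p := (p.1, m p.1 * p.2)
  invFun p := (p.1, (m p.1)⁻¹ * p.2)
  left_inv p := by simp
  right_inv p := by simp

/-- the induced action -/
def rho : F4 →* Equiv.Perm (Bool × GG) :=
  FreeGroup.lift fun x => match x with
    | L4.a => flipP
    | x => diagP fun i => q (ev (piece i x))

theorem rho_a (i : Bool) (g : GG) : rho ga (i, g) = (!i, g) := by simp [rho, ga, flipP]
theorem rho_v {x : L4} (hx : x ≠ L4.a) (i : Bool) (g : GG) :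
    rho (FreeGroup.of x) (i, g) = (i, q (ev (piece i x)) * g) := by
  cases x <;> first | exact absurd rfl hx | simp [rho, diagP]

theorem rho_b0 (g : GG) : rho gb (false, g) = (false, q gc * g) := by
  rw [gb, rho_v (by decide)]; simp [ev, piece, gc]
theorem rho_b1 (g : GG) : rho gb (true, g) = (true, q ga * g) := by
  rw [gb, rho_v (by decide)]; simp [ev, piece, ga]
theorem rho_c0 (g : GG) : rho gc (false, g) = (false, q gd * g) := by
  rw [gc, rho_v (by decide)]; simp [ev, piece, gd]
theorem rho_c1 (g : GG) : rho gc (true, g) = (true, q ga * g) := by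
  rw [gc, rho_v (by decide)]; simp [ev, piece, ga]
theorem rho_d0 (g : GG) : rho gd (false, g) = (false, q gb * g) := by
  rw [gd, rho_v (by decide)]; simp [ev, piece, gb]
theorem rho_d1 (g : GG) : rho gd (true, g) = (true, g) := by
  rw [gd, rho_v (by decide)]; simp [ev, piece]

theorem rho_ev (w : List L4) : ∀ (j : Bool) (g : GG),
    rho (ev w) (xor j (par w), g) = (j, q (ev (sec j w)) * g) := by
  induction w with
  | nil => intro j g; simp [ev, par, sec]
  | cons x w ih =>
    intro j g
    rw [ev_cons, map_mul, Equiv.Perm.mul_apply]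
    by_cases hx : x = L4.a
    · subst hx
      have := ih (!j) g
      have e : xor j (par (L4.a :: w)) = xor (!j) (par w) := by
        simp [par]
      rw [e, this]
      change rho ga _ = _
      rw [rho_a]; simp [sec]
    · rw [par_v hx, ih, rho_v hx, sec_v hx, ev_append, map_mul, mul_assoc]

theorem rho_sigma (u : F4) : (∀ g, rho (sigma u) (false, g) = (false, q u * g)) ∧
    (∀ g, rho (sigma u) (true, g) = (true, q (phi u) * g)) := by
  induction u using FreeGroup.induction_on with
  | C1 => simp
  | of x =>
    rcases gen_of x with e | e | e | e <;> rw [e] <;>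
      simp only [sigma_a, sigma_b, sigma_c, sigma_d, phi_a, phi_b, phi_c, phi_d, map_mul,
        Equiv.Perm.mul_apply, rho_a, rho_b0, rho_b1, rho_c0, rho_c1, rho_d0, rho_d1, Bool.not_true,
        Bool.not_false, map_one, one_mul, implies_true, and_self]
  | inv_of x ih =>
    obtain ⟨h0, h1⟩ := ih
    constructor <;> intro g <;> rw [map_inv, map_inv, Equiv.Perm.inv_eq_iff_eq]
    · rw [h0]; simp
    · rw [h1]; simp
  | mul u v hu hv =>
    constructor <;> intro g <;> rw [map_mul, map_mul, Equiv.Perm.mul_apply]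
    · rw [hv.1, hu.1, map_mul, mul_assoc]
    · rw [hv.2, hu.2, map_mul, map_mul, mul_assoc]

theorem rho_sigma_one {u : F4} (h : q u = 1) : rho (sigma u) = 1 := by
  ext1 ⟨i, g⟩
  cases i
  · rw [(rho_sigma u).1, h]; simp
  · rw [(rho_sigma u).2, phi_NN h]; simp

theorem rho_NN {u : F4} (h : q u = 1) : rho u = 1 := by
  have : NN ≤ rho.ker := by
    apply Subgroup.normalClosure_le_normal
    rintro r ((h | ⟨i, rfl⟩) | ⟨i, rfl⟩)
    · simp only [Set.mem_insert_iff, Set.mem_singleton_iff] at h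
      rw [SetLike.mem_coe, MonoidHom.mem_ker]
      rcases h with rfl | rfl | rfl | rfl | rfl <;> ext1 ⟨i, g⟩ <;> cases i <;>
        simp only [pow_two, map_mul,
          Equiv.Perm.mul_apply, rho_a, rho_b0, rho_b1, rho_c0, rho_c1, rho_d0, rho_d1,
          Bool.not_true, Bool.not_false, assocL qaa, assocL qbb, assocL qcc, assocL qdd, one_mul,
          Equiv.Perm.one_apply]
      rw [qb_eq, mul_assoc, assocL qdc, mul_assoc, assocL qdd, one_mul, assocL qcc, one_mul]
    · rw [SetLike.mem_coe, MonoidHom.mem_ker]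
      cases i with
      | zero =>
        ext1 ⟨i, g⟩; cases i <;>
        simp only [Function.iterate_zero, id, show 4 = 1 + 1 + 1 + 1 by rfl, pow_add, pow_one,
          map_mul, Equiv.Perm.mul_apply, rho_a, rho_b0, rho_b1, rho_c0, rho_c1, rho_d0, rho_d1,
          Bool.not_true, Bool.not_false, assocL qaa, assocL qbb, assocL qcc, assocL qdd, one_mul,
          Equiv.Perm.one_apply]
      | succ i =>
        rw [Function.iterate_succ_apply']
        exact rho_sigma_one (q_rel (Or.inl (Or.inr ⟨i, rfl⟩)))
    · rw [SetLike.mem_coe, MonoidHom.mem_ker]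
      cases i with
      | zero =>
        ext1 ⟨i, g⟩; cases i <;>
        simp only [Function.iterate_zero, id, show 4 = 1 + 1 + 1 + 1 by rfl, pow_add, pow_one,
          map_mul, Equiv.Perm.mul_apply, rho_a, rho_b0, rho_b1, rho_c0, rho_c1, rho_d0, rho_d1,
          Bool.not_true, Bool.not_false, assocL qaa, assocL qbb, assocL qcc, assocL qdd, one_mul,
          Equiv.Perm.one_apply]
      | succ i =>
        rw [Function.iterate_succ_apply']
        exact rho_sigma_one (q_rel (Or.inr ⟨i, rfl⟩))
  exact this (q_one.1 h)

theorem sec_NN {w : List L4} (h : q (ev w) = 1) :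
    par w = false ∧ ∀ j, q (ev (sec j w)) = 1 := by
  have h1 : ∀ j, (xor j (par w), (1 : GG)) = (j, q (ev (sec j w)) * 1) := by
    intro j
    rw [← rho_ev, rho_NN h]; rfl
  constructor
  · have := (Prod.ext_iff.1 (h1 false)).1
    simpa using this
  · intro j
    have := (Prod.ext_iff.1 (h1 j)).2
    simpa using this.symm

/-- product of basic conjugates -/
def Vg (gs : List II) : F4 := (gs.map cc).prod

theorem Vg_nil : Vg [] = 1 := rfl
theorem Vg_cons (h : II) (gs : List II) : Vg (h :: gs) = cc h * Vg gs := by simp [Vg]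
theorem Vg_append (gs hs : List II) : Vg (gs ++ hs) = Vg gs * Vg hs := by simp [Vg]

theorem conjK : ∃ K, ∀ (i : Bool) (x : L4) (h : II), ∃ h',
    E K (sigma (ev (piece i x)) * tau (cc h) * (sigma (ev (piece i x)))⁻¹) (tau (cc h')) ∧
    E K (phi (ev (piece i x)) * cc h * (phi (ev (piece i x)))⁻¹) (cc h') := by
  have := unif (ι := Bool × L4 × II) (P := fun p K => ∃ h',
    E K (sigma (ev (piece p.1 p.2.1)) * tau (cc p.2.2) * (sigma (ev (piece p.1 p.2.1)))⁻¹)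
      (tau (cc h')) ∧
    E K (phi (ev (piece p.1 p.2.1)) * cc p.2.2 * (phi (ev (piece p.1 p.2.1)))⁻¹) (cc h'))
    (fun p m n hmn ⟨h', h1, h2⟩ => ⟨h', h1.mono hmn, h2.mono hmn⟩)
    (fun p => by
      obtain ⟨h', h1, h2⟩ := conjG (ev (piece p.1 p.2.1)) p.2.2
      obtain ⟨k, hk⟩ := ex_E h1
      obtain ⟨l, hl⟩ := ex_E h2
      exact ⟨k + l, h', hk.mono (by omega), hl.mono (by omega)⟩)
  obtain ⟨K, hK⟩ := this
  exact ⟨K, fun i x h => hK (i, x, h)⟩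

theorem conjList : ∃ K, ∀ (i : Bool) (x : L4) (gs : List II), ∃ gs', gs'.length = gs.length ∧
    E (K * gs.length) (sigma (ev (piece i x)) * tau (Vg gs) * (sigma (ev (piece i x)))⁻¹)
      (tau (Vg gs')) ∧
    E (K * gs.length) (phi (ev (piece i x)) * Vg gs * (phi (ev (piece i x)))⁻¹) (Vg gs') := by
  obtain ⟨K, hK⟩ := conjK
  refine ⟨K, fun i x gs => ?_⟩
  induction gs with
  | nil => exact ⟨[], rfl, by simpa [Vg] using E.refl 1 _, by simpa [Vg] using E.refl 1 _⟩
  | cons h gs ih =>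
    obtain ⟨gs', hl, h1, h2⟩ := ih
    obtain ⟨h', k1, k2⟩ := hK i x h
    refine ⟨h' :: gs', by simp [hl], ?_, ?_⟩
    · have := k1.mul h1
      rw [Vg_cons, Vg_cons, map_mul, map_mul, List.length_cons,
        show K * (gs.length + 1) = K + K * gs.length by ring]
      simpa [mul_assoc] using this
    · have := k2.mul h2
      rw [Vg_cons, Vg_cons, List.length_cons,
        show K * (gs.length + 1) = K + K * gs.length by ring]
      simpa [mul_assoc] using this

/-- prefix -/
def pre (i : Bool) : F4 := if i then ga else 1

theorem cc_zero : cc (0, 0) = gb := by simp [cc, rep_zero]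

theorem letterG (i : Bool) (x : L4) (hx : x ≠ L4.a) : ∃ ge : List II, ge.length ≤ 1 ∧
    q (pre i * FreeGroup.of x * (pre i)⁻¹) = q (tau (Vg ge) * sigma (ev (piece i x))) ∧
    q (ev (piece (!i) x)) = q (Vg ge * phi (ev (piece i x))) := by
  have ea : FreeGroup.of L4.a = ga := rfl
  have eb : FreeGroup.of L4.b = gb := rfl
  have ec : FreeGroup.of L4.c = gc := rfl
  have ed : FreeGroup.of L4.d = gd := rfl
  cases i
  · refine ⟨[], by simp, ?_, ?_⟩ <;> cases x <;> first | exact absurd rfl hx |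
      simp [pre, piece, ev, Vg, ea, eb, ec, ed, sigma_b, sigma_c, sigma_d, phi_b, phi_c, phi_d]
  · cases x
    · exact absurd rfl hx
    · refine ⟨[(0, 0)], by simp, ?_, ?_⟩
      · simp only [pre, if_true, piece, ev_cons, ev_nil, Vg_cons, Vg_nil, cc_zero, ea, eb, mul_one,
          tau_apply, sigma_a, sigma_b, map_mul, map_inv, qai, mul_assoc, assocL qaa, one_mul, qb_eq,
          assocL qdc]
      · simp only [piece, ev_cons, ev_nil, Vg_cons, Vg_nil, cc_zero, ea, ec, mul_one, phi_a,
          map_mul, qb_eq, mul_assoc, qdd, Bool.not_true]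
    · refine ⟨[], by simp, ?_, ?_⟩
      · simp only [pre, if_true, piece, ev_cons, ev_nil, Vg_nil, ea, ec, mul_one,
          sigma_a, map_mul, map_inv, map_one, qai, one_mul]
      · simp only [piece, ev_cons, ev_nil, Vg_nil, ea, ed, mul_one, phi_a, one_mul, Bool.not_true]
    · refine ⟨[(0, 0)], by simp, ?_, ?_⟩
      · simp only [pre, if_true, piece, ev_nil, Vg_cons, Vg_nil, cc_zero, ed, mul_one,
          tau_apply, sigma_b, map_one]
      · simp only [piece, ev_cons, ev_nil, Vg_cons, Vg_nil, cc_zero, eb, mul_one, map_one,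
          Bool.not_true]

theorem letterK : ∃ K, ∀ (i : Bool) (x : L4), x ≠ L4.a → ∃ ge : List II, ge.length ≤ 1 ∧
    E K (pre i * FreeGroup.of x * (pre i)⁻¹) (tau (Vg ge) * sigma (ev (piece i x))) ∧
    E K (ev (piece (!i) x)) (Vg ge * phi (ev (piece i x))) := by
  have := unif (ι := Bool × L4) (P := fun p K => p.2 ≠ L4.a → ∃ ge : List II, ge.length ≤ 1 ∧
    E K (pre p.1 * FreeGroup.of p.2 * (pre p.1)⁻¹) (tau (Vg ge) * sigma (ev (piece p.1 p.2))) ∧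
    E K (ev (piece (!p.1) p.2)) (Vg ge * phi (ev (piece p.1 p.2))))
    (fun p m n hmn h hp => by
      obtain ⟨ge, h0, h1, h2⟩ := h hp
      exact ⟨ge, h0, h1.mono hmn, h2.mono hmn⟩)
    (fun p => by
      by_cases hp : p.2 = L4.a
      · exact ⟨0, fun h => absurd hp h⟩
      obtain ⟨ge, h0, h1, h2⟩ := letterG p.1 p.2 hp
      obtain ⟨k, hk⟩ := ex_E h1
      obtain ⟨l, hl⟩ := ex_E h2
      exact ⟨k + l, fun _ => ⟨ge, h0, hk.mono (by omega), hl.mono (by omega)⟩⟩)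
  obtain ⟨K, hK⟩ := this
  exact ⟨K, fun i x h => hK (i, x) h⟩

theorem split : ∃ K, ∀ (w : List L4) (i : Bool), ∃ gs : List II, gs.length ≤ w.length ∧
    E (K * w.length ^ 2) (pre i * ev w * (pre (xor i (par w)))⁻¹)
      (tau (Vg gs) * sigma (ev (sec i w))) ∧
    E (K * w.length ^ 2) (ev (sec (!i) w)) (Vg gs * phi (ev (sec i w))) := by
  obtain ⟨K1, h1⟩ := conjList
  obtain ⟨K2, h2⟩ := letterK
  obtain ⟨K3, h3⟩ := ex_E (u := ga * ga) (v := 1) (by rw [map_mul, qaa, map_one])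
  refine ⟨K1 + K2 + K3, fun w => ?_⟩
  induction w with
  | nil =>
    intro i
    exact ⟨[], le_rfl, E.of_eq (by simp [ev, Vg, sec, par]) _, E.of_eq (by simp [ev, Vg, sec]) _⟩
  | cons x w ih =>
    intro i
    by_cases hx : x = L4.a
    · subst hx
      obtain ⟨gs, hl, e1, e2⟩ := ih (!i)
      refine ⟨gs, by simp; omega, ?_, ?_⟩
      · have hp : xor i (par (L4.a :: w)) = xor (!i) (par w) := by simp [par]
        have hs : sec i (L4.a :: w) = sec (!i) w := rfl
        rw [hp, hs]
        have : E K3 (pre i * ev (L4.a :: w) * (pre (xor (!i) (par w)))⁻¹)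
            (pre (!i) * ev w * (pre (xor (!i) (par w)))⁻¹) := by
          rw [ev_cons]
          cases i
          · exact E.of_eq (by simp [pre, ga]) _
          · have := h3.mul (E.refl (ev w * (pre (xor (!true) (par w)))⁻¹) 0)
            simpa [pre, mul_assoc, ga] using this
        refine (this.trans e1).mono ?_
        rw [List.length_cons]; nlinarith [Nat.zero_le (K1 * w.length), Nat.zero_le (K2 * w.length), Nat.zero_le (K3 * w.length)]
      · refine E.mono e2 ?_
        rw [List.length_cons]; gcongr; omega
    · obtain ⟨gs, hl, e1, e2⟩ := ih i
      obtain ⟨ge, gl, f1, f2⟩ := h2 i x hx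
      obtain ⟨gs', hl', g1, g2⟩ := h1 i x gs
      have hb : K2 + (K1 + K2 + K3) * w.length ^ 2 + K1 * gs.length ≤
          (K1 + K2 + K3) * (x :: w).length ^ 2 := by
        rw [List.length_cons]
        have := Nat.mul_le_mul_left K1 hl
        nlinarith [Nat.zero_le (K1 * w.length), Nat.zero_le (K2 * w.length), Nat.zero_le (K3 * w.length)]
      refine ⟨ge ++ gs', by simp; omega, ?_, ?_⟩
      · rw [par_v hx, sec_v hx, ev_cons, ev_append, Vg_append, map_mul, map_mul]
        have a1 := f1.mul e1
        have a2 := ((E.refl (tau (Vg ge)) 0).mul g1).mul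
          (E.refl (sigma (ev (piece i x)) * sigma (ev (sec i w))) 0)
        have a3 : E (K2 + (K1 + K2 + K3) * w.length ^ 2 + (0 + K1 * gs.length + 0))
          (pre i * (FreeGroup.of x * ev w) * (pre (xor i (par w)))⁻¹)
          (tau (Vg ge) * tau (Vg gs') * (sigma (ev (piece i x)) * sigma (ev (sec i w)))) := by
          refine E.trans (v := tau (Vg ge) * sigma (ev (piece i x)) *
            (tau (Vg gs) * sigma (ev (sec i w)))) ?_ ?_
          · simpa [mul_assoc] using a1
          · simpa [mul_assoc] using a2
        exact a3.mono (by omega)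
      · rw [sec_v hx, sec_v hx, ev_append, ev_append, Vg_append, map_mul]
        have a1 := f2.mul e2
        have a2 := ((E.refl (Vg ge) 0).mul g2).mul
          (E.refl (phi (ev (piece i x)) * phi (ev (sec i w))) 0)
        have a3 : E (K2 + (K1 + K2 + K3) * w.length ^ 2 + (0 + K1 * gs.length + 0))
          (ev (piece (!i) x) * ev (sec (!i) w))
          (Vg ge * Vg gs' * (phi (ev (piece i x)) * phi (ev (sec i w)))) := by
          refine E.trans (v := Vg ge * phi (ev (piece i x)) *
            (Vg gs * phi (ev (sec i w)))) ?_ ?_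
          · simpa [mul_assoc] using a1
          · simpa [mul_assoc] using a2
        exact a3.mono (by omega)

theorem phi_lin : ∃ K, ∀ w : List L4, q (phi (ev w)) = 1 → Ar (K * (w.length + 1)) (phi (ev w)) := by
  have hA := unif (ι := L4 × II) (P := fun p K => ∃ h', E K (phi (FreeGroup.of p.1) * rep p.2)
      (rep h')) (fun p m n hmn ⟨h', h⟩ => ⟨h', h.mono hmn⟩) (fun p => by
        obtain ⟨u, hu⟩ := rep_phi p.2
        obtain ⟨h', hh⟩ := phi_rep (FreeGroup.of p.1 * u)
        rw [map_mul phi, hu] at hh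
        obtain ⟨k, hk⟩ := ex_E hh
        exact ⟨k, h', hk⟩)
  have hB := unif (ι := II) (P := fun h K => q (rep h) = 1 → Ar K (rep h))
    (fun p m n hmn h hp => (h hp).mono hmn) (fun p => by
      by_cases hp : q (rep p) = 1
      · obtain ⟨k, hk⟩ := ex_Ar hp
        exact ⟨k, fun _ => hk⟩
      · exact ⟨0, fun h => absurd h hp⟩)
  obtain ⟨K1, hA⟩ := hA
  obtain ⟨K2, hB⟩ := hB
  have hC : ∀ w : List L4, ∃ h, q (phi (ev w)) = q (rep h) ∧
      E (K1 * w.length) (phi (ev w)) (rep h) := by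
    intro w
    induction w with
    | nil => exact ⟨(0, 0), by simp [ev, rep_zero], E.of_eq (by simp [ev, rep_zero]) _⟩
    | cons x w ih =>
      obtain ⟨h, e0, e⟩ := ih
      obtain ⟨h', e'⟩ := hA (x, h)
      have e2 := ((E.refl (phi (FreeGroup.of x)) 0).mul e).trans e'
      have e3 : E (K1 * (x :: w).length) (phi (ev (x :: w))) (rep h') := by
        rw [ev_cons, map_mul]
        exact e2.mono (by simp [mul_add])
      exact ⟨h', E_q e3, e3⟩
  refine ⟨K1 + K2, fun w hw => ?_⟩
  obtain ⟨h, e0, e⟩ := hC w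
  refine (e.ar (hB h (e0 ▸ hw))).mono ?_
  nlinarith [Nat.zero_le (K2 * w.length)]

/-- alternating words -/
def red : List L4 → Prop
  | [] => True
  | [_] => True
  | x :: y :: w => (x = L4.a ↔ y ≠ L4.a) ∧ red (y :: w)

theorem red_tail {x : L4} {w : List L4} (h : red (x :: w)) : red w := by
  cases w with
  | nil => trivial
  | cons y w => exact h.2

theorem red_change {x y : L4} {w : List L4} (hxy : x = L4.a ↔ y = L4.a) (h : red (y :: w)) :
    red (x :: w) := by
  cases w with
  | nil => trivial
  | cons z w => exact ⟨hxy.trans h.1, h.2⟩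

theorem piece_len (i : Bool) (x : L4) : (piece i x).length ≤ 1 := by
  cases i <;> cases x <;> simp [piece]

theorem sec_len (w : List L4) : ∀ i, red w → 2 * (sec i w).length ≤ w.length + 1 ∧
    (∀ w', w = L4.a :: w' → 2 * (sec i w).length ≤ w.length) := by
  induction w with
  | nil => intro i _; simp [sec]
  | cons x w ih =>
    intro i h
    by_cases hx : x = L4.a
    · subst hx
      have := (ih (!i) (red_tail h)).1
      have hs : sec i (L4.a :: w) = sec (!i) w := rfl
      rw [hs, List.length_cons]
      exact ⟨by omega, fun _ _ => by omega⟩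
    · refine ⟨?_, fun w' e => absurd (List.cons.inj e).1 hx⟩
      have hp := piece_len i x
      rw [sec_v hx, List.length_append, List.length_cons]
      cases w with
      | nil => simp [sec]; omega
      | cons y w =>
        have hy : y = L4.a := by
          by_contra hy
          exact hx (h.1.2 hy)
        have := (ih i (red_tail h)).2 w (by rw [hy])
        omega

theorem pairG (x y : L4) (h : x = L4.a ↔ y = L4.a) :
    q (FreeGroup.of x * FreeGroup.of y) = q 1 ∨ ∃ t : L4, (t = L4.a ↔ y = L4.a) ∧
      q (FreeGroup.of x * FreeGroup.of y) = q (FreeGroup.of t) := by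
  have ea : FreeGroup.of L4.a = ga := rfl
  have eb : FreeGroup.of L4.b = gb := rfl
  have ec : FreeGroup.of L4.c = gc := rfl
  have ed : FreeGroup.of L4.d = gd := rfl
  cases x <;> cases y <;> simp only [reduceCtorEq, iff_true, iff_false, not_true] at h <;>
    simp only [ea, eb, ec, ed, map_mul, map_one, qaa, qbb, qcc, qdd, true_or]
  · exact Or.inr ⟨L4.d, by simp, by rw [ed, qb_eq, mul_assoc, qdc, assocL qcc, one_mul]⟩
  · exact Or.inr ⟨L4.c, by simp, by rw [ec, qb_eq, mul_assoc, qdd, mul_one]⟩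
  · exact Or.inr ⟨L4.d, by simp, by rw [ed, qb_eq, assocL qcc, one_mul]⟩
  · exact Or.inr ⟨L4.b, by simp, by rw [eb, qb_eq]⟩
  · exact Or.inr ⟨L4.c, by simp, by rw [ec, qb_eq, assocL qdc, mul_assoc, qdd, mul_one]⟩
  · exact Or.inr ⟨L4.b, by simp, by rw [eb, qb_eq, qdc]⟩

theorem pairK : ∃ K, ∀ x y : L4, (x = L4.a ↔ y = L4.a) →
    E K (FreeGroup.of x * FreeGroup.of y) 1 ∨ ∃ t : L4, (t = L4.a ↔ y = L4.a) ∧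
      E K (FreeGroup.of x * FreeGroup.of y) (FreeGroup.of t) := by
  obtain ⟨K, hK⟩ := unif (ι := L4 × L4) (P := fun p K => (p.1 = L4.a ↔ p.2 = L4.a) →
    E K (FreeGroup.of p.1 * FreeGroup.of p.2) 1 ∨ ∃ t : L4, (t = L4.a ↔ p.2 = L4.a) ∧
      E K (FreeGroup.of p.1 * FreeGroup.of p.2) (FreeGroup.of t))
    (fun p m n hmn h hp => by
      rcases h hp with h | ⟨t, ht, h⟩
      · exact Or.inl (h.mono hmn)
      · exact Or.inr ⟨t, ht, h.mono hmn⟩)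
    (fun p => by
      by_cases hp : (p.1 = L4.a ↔ p.2 = L4.a)
      · rcases pairG p.1 p.2 hp with h | ⟨t, ht, h⟩ <;> obtain ⟨k, hk⟩ := ex_E h
        · exact ⟨k, fun _ => Or.inl hk⟩
        · exact ⟨k, fun _ => Or.inr ⟨t, ht, hk⟩⟩
      · exact ⟨0, fun h => absurd h hp⟩)
  exact ⟨K, fun x y => hK (x, y)⟩

theorem normalize_word : ∃ K, ∀ w : List L4, ∃ w', red w' ∧ w'.length ≤ w.length ∧
    E (K * w.length) (ev w) (ev w') := by
  obtain ⟨K, hK⟩ := pairK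
  refine ⟨K, fun w => ?_⟩
  induction w with
  | nil => exact ⟨[], trivial, le_rfl, E.refl _ _⟩
  | cons x w ih =>
    obtain ⟨w', hr, hl, e⟩ := ih
    suffices ∃ w'', red w'' ∧ w''.length ≤ w'.length + 1 ∧
        E K (FreeGroup.of x * ev w') (ev w'') by
      obtain ⟨w'', h1, h2, h3⟩ := this
      refine ⟨w'', h1, by simp; omega, ?_⟩
      rw [ev_cons]
      exact (((E.refl (FreeGroup.of x) 0).mul e).trans h3).mono (by simp [mul_add])
    cases w' with
    | nil => exact ⟨[x], trivial, by simp, E.of_eq (by simp [ev]) _⟩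
    | cons y w' =>
      by_cases hxy : x = L4.a ↔ y = L4.a
      · rcases hK x y hxy with h | ⟨t, ht, h⟩
        · refine ⟨w', red_tail hr, by simp; omega, ?_⟩
          have := h.mul (E.refl (ev w') 0)
          simpa [ev_cons, mul_assoc] using this
        · refine ⟨t :: w', red_change ht hr, by simp, ?_⟩
          have := h.mul (E.refl (ev w') 0)
          simpa [ev_cons, mul_assoc] using this
      · exact ⟨x :: y :: w', ⟨by tauto, hr⟩, by simp, E.of_eq (ev_cons _ _).symm _⟩

theorem positive : ∃ K, ∀ l : List (L4 × Bool), E (K * l.length) (FreeGroup.mk l)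
    (ev (l.map Prod.fst)) := by
  obtain ⟨K, hK⟩ := unif (ι := L4 × Bool) (P := fun p K => E K (FreeGroup.mk [p])
    (FreeGroup.of p.1)) (fun p m n hmn h => h.mono hmn) (fun p => by
      obtain ⟨x, i⟩ := p
      cases i
      · apply ex_E
        have : FreeGroup.mk [(x, false)] = (FreeGroup.of x)⁻¹ := by
          simp [FreeGroup.of, FreeGroup.inv_mk, FreeGroup.invRev]
        rw [this, map_inv]
        rcases gen_of x with h | h | h | h <;> rw [h]
        · exact qai
        · exact qbi
        · exact qci
        · exact qdi
      · exact ⟨0, E.refl _ _⟩)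
  refine ⟨K, fun l => ?_⟩
  induction l with
  | nil => exact E.of_eq (by simp [ev, FreeGroup.one_eq_mk]) _
  | cons p l ih =>
    have h : FreeGroup.mk (p :: l) = FreeGroup.mk [p] * FreeGroup.mk l := by
      rw [FreeGroup.mul_mk]; rfl
    rw [h, List.map_cons, ev_cons]
    exact ((hK p).mul ih).mono (by simp [mul_add, add_comm])

theorem short {w : List L4} (hr : red w) (hl : w.length ≤ 2) (h : q (ev w) = 1) : w = [] := by
  have hp := (sec_NN h).1
  match w, hr, hl with
  | [], _, _ => rfl
  | [L4.a], _, _ => simp [par] at hp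
  | [L4.b], _, _ =>
    have := (sec_NN ((sec_NN h).2 true)).1
    simp [par, sec, piece] at this
  | [L4.c], _, _ =>
    have := (sec_NN ((sec_NN h).2 true)).1
    simp [par, sec, piece] at this
  | [L4.d], _, _ =>
    have := (sec_NN ((sec_NN ((sec_NN h).2 false)).2 true)).1
    simp [par, sec, piece] at this
  | [x, y], hr, _ =>
    have hr := hr.1
    exfalso
    cases x <;> cases y <;> simp [par] at hr hp

theorem step : ∃ K, ∀ (w : List L4) (f0 f1 : ℕ), q (ev w) = 1 → w.length ≠ 0 →
    Ar f0 (ev (sec true w)) → Ar f1 (ev (sec false w)) → (sec false w).length ≤ w.length →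
    Ar (f0 + f1 + K * w.length ^ 2) (ev w) := by
  obtain ⟨K1, h1⟩ := split
  obtain ⟨K2, h2⟩ := phi_lin
  refine ⟨2 * K1 + 2 * K2, fun w f0 f1 hw hn a0 a1 hl => ?_⟩
  obtain ⟨gs, -, e1, e2⟩ := h1 w false
  have hs := sec_NN hw
  have p1 := h2 (sec false w) (phi_NN (hs.2 false))
  have v1 : Ar (f0 + K1 * w.length ^ 2 + K2 * ((sec false w).length + 1)) (Vg gs) := by
    have := ((E.symm e2).ar a0).mul p1.inv
    refine Ar.mono (by simpa [mul_assoc] using this) (by omega)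
  have v2 := e1.ar (v1.tau.mul a1.sigma)
  rw [hs.1] at v2
  have hpre : pre false * ev w * (pre (xor false false))⁻¹ = ev w := by simp [pre]
  rw [hpre] at v2
  refine v2.mono ?_
  have h3 : (sec false w).length + 1 ≤ 2 * w.length ^ 2 := by
    have : 1 ≤ w.length := Nat.one_le_iff_ne_zero.2 hn
    nlinarith
  have := Nat.mul_le_mul_left K2 h3
  nlinarith

theorem main_list : ∃ K, ∀ (n : ℕ) (w : List L4), w.length ≤ n → q (ev w) = 1 →
    Ar (K * n ^ 2) (ev w) := by
  obtain ⟨K1, h1⟩ := normalize_word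
  obtain ⟨K2, h2⟩ := step
  refine ⟨9 * (K1 + K2), fun n => ?_⟩
  induction n using Nat.strong_induction_on with
  | _ n ih =>
    intro w hl hw
    obtain ⟨w', hr, hl', e⟩ := h1 w
    have hw' : q (ev w') = 1 := by rw [← E_q e, hw]
    by_cases hs : w'.length ≤ 2
    · have hnil := short hr hs hw'
      rw [hnil] at e
      have := e.ar (Ar.one 0)
      refine this.mono ?_
      have h3 : w.length ≤ n ^ 2 := by nlinarith
      have := Nat.mul_le_mul_left K1 h3
      nlinarith [Nat.zero_le (K1 * n ^ 2), Nat.zero_le (K2 * n ^ 2)]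
    · have hn : 3 ≤ n := by omega
      have s0 := (sec_len w' true hr).1
      have s1 := (sec_len w' false hr).1
      have a0 := ih ((n + 1) / 2) (by omega) (sec true w') (by omega) ((sec_NN hw').2 true)
      have a1 := ih ((n + 1) / 2) (by omega) (sec false w') (by omega) ((sec_NN hw').2 false)
      have a2 := e.ar (h2 w' _ _ hw' (by omega) a0 a1 (by omega))
      refine a2.mono ?_
      have hm : 2 * ((n + 1) / 2) ≤ n + 1 := by omega
      generalize (n + 1) / 2 = m at hm
      have hm2 : 4 * m ^ 2 ≤ (n + 1) ^ 2 := by nlinarith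
      have b1 : K1 * w.length ≤ K1 * n ^ 2 := Nat.mul_le_mul_left _ (by nlinarith)
      have b2 : K2 * w'.length ^ 2 ≤ K2 * n ^ 2 :=
        Nat.mul_le_mul_left _ (Nat.pow_le_pow_left (by omega) 2)
      have b3 : 18 * m ^ 2 + n ^ 2 ≤ 9 * n ^ 2 := by nlinarith
      have := Nat.mul_le_mul_left (K1 + K2) b3
      nlinarith

/-- the Dehn 2-function of the presentation `⟨a,b,c,d ∥ R*(∞)⟩`
of the Grigorchuk 2-group is bounded from above by a quadratic function. -/
theorem grigorchuk_star_dehn_quadratic :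
    ∃ C : ℝ, 1 < C ∧
      ∀ x : ℕ, 1 ≤ x →
        ∀ W ∈ Subgroup.normalClosure Rinf, FreeGroup.norm W ≤ x →
          ∃ L : ℕ, (L : ℝ) ≤ C * (x : ℝ) ^ 2 ∧ IsProdConjPM RinfStar L W := by
  obtain ⟨K1, h1⟩ := positive
  obtain ⟨K2, h2⟩ := main_list
  refine ⟨(K1 : ℝ) + K2 + 2, by
    have := Nat.cast_nonneg (α := ℝ) K1
    have := Nat.cast_nonneg (α := ℝ) K2
    linarith, ?_⟩
  intro x hx W hW hn
  have e := h1 W.toWord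
  rw [FreeGroup.mk_toWord] at e
  have hl : W.toWord.length ≤ x := hn
  have hq : q (ev (W.toWord.map Prod.fst)) = 1 := by rw [← E_q e]; exact q_one.2 hW
  obtain ⟨L, hL, hp⟩ := (e.ar (h2 x _ (by simpa using hl) hq)).toProd
  refine ⟨L, ?_, hp⟩
  have h3 : L ≤ (K1 + K2 + 2) * x ^ 2 := by
    have b : K1 * W.toWord.length ≤ K1 * x ^ 2 := Nat.mul_le_mul_left _ (by nlinarith)
    nlinarith
  exact_mod_cast h3
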